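/- arXiv:2104.11053 — 2 statements merged into one kernel-verified Lean document; each statement's English description precedes it below -/
import Mathlib

section
/- Let F : V×V×V → ℝ be an apapR-symmetric trilinear form. Set θ₀ = F₁₁₀ + F₂₂₀, θ₁ = F₁₁₁, θ₂ = F₂₂₂, θ*₀ = F₁₂₀ + F₂₁₀, λ = (F₁₁₀ − F₂₂₀)/2, μ = (F₁₂₀ − F₂₁₀)/2, ν = F₀₁₁, ω₁ = F₀₀₁, ω₂ = F₀₀₂. Then F = F¹ + F⁴ + F⁵ + F⁸ + F⁹ + F¹⁰ + F¹¹, where the seven summands are the basic-class forms with these parameters. (In particular a 3-dimensional apapR manifold can belong only to the classes F₁, F₄, F₅, F₈, F₉, F₁₀, F₁₁ and their direct sums.) -/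
noncomputable section

/-- `V = ℝ³` with standard basis and inner product. -/
abbrev V3 : Type := Fin 3 → ℝ

/-- The standard basis `e₀, e₁, e₂` of `V3`. -/
def e3 (i : Fin 3) : V3 := Pi.single i 1

/-- The standard inner product `g` on `V3`. -/
def g3 (x y : V3) : ℝ := ∑ i, x i * y i

/-- The paracontact endomorphism `φ`: `φe₀ = 0`, `φe₁ = e₂`, `φe₂ = e₁`. -/
def phi3 (x : V3) : V3 := ![0, x 2, x 1]

/-- A map `F : V×V×V → ℝ` is trilinear. -/
def IsTrilinear (F : V3 → V3 → V3 → ℝ) : Prop :=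
  (∀ (c : ℝ) (x x' y z : V3), F (c • x + x') y z = c * F x y z + F x' y z) ∧
  (∀ (c : ℝ) (x y y' z : V3), F x (c • y + y') z = c * F x y z + F x y' z) ∧
  (∀ (c : ℝ) (x y z z' : V3), F x y (c • z + z') = c * F x y z + F x y z')

/-- A trilinear form is apapR-symmetric if it has the symmetries of the fundamental
tensor of an almost paracontact almost paracomplex Riemannian manifold:
`F(x,y,z) = F(x,z,y)` and `F(x,y,z) = −F(x,φy,φz) + η(y)F(x,ξ,z) + η(z)F(x,y,ξ)`. -/
def IsApapRSymmetric (F : V3 → V3 → V3 → ℝ) : Prop :=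
  IsTrilinear F ∧
  (∀ x y z, F x y z = F x z y) ∧
  (∀ x y z, F x y z = - F x (phi3 y) (phi3 z) + y 0 * F x (e3 0) z + z 0 * F x y (e3 0))

/-!
For fixed `x`, the symmetries of `F` say that `F(x,·,·)` is a symmetric bilinear form which changes
sign under `φ` on the plane `ker η` and vanishes at `(ξ,ξ)`. Such forms on `ℝ³` are spanned by
`y¹z¹ − y²z²`, `y⁰z¹ + y¹z⁰` and `y⁰z² + y²z⁰`, with coefficients `F(x,e₁,e₁)`, `F(x,e₁,ξ)` and
`F(x,e₂,ξ)`. Each coefficient is a linear function of `x`, which accounts for nine parameters in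
all.
-/

theorem isLinearMap_of_map_smul_add {R M N : Type*} [Semiring R] [AddCommMonoid M] [Module R M]
    [AddCommGroup N] [Module R N] {f : M → N}
    (h : ∀ (c : R) (x y : M), f (c • x + y) = c • f x + f y) : IsLinearMap R f where
  map_add x y := by simpa using h 1 x y
  map_smul c x := by
    have map_zero : f 0 = 0 := by simpa using h 1 0 0
    simpa [map_zero] using h c x 0

theorem isLinearMap_apply_eq_sum_single {R ι M : Type*} [Semiring R] [Fintype ι] [DecidableEq ι]
    [AddCommMonoid M] [Module R M] {f : (ι → R) → M} (hf : IsLinearMap R f) (x : ι → R) :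
    f x = ∑ i, x i • f (Pi.single i 1) := by
  calc
    f x = hf.mk' f (∑ i, x i • Pi.single i 1) := by
      rw [← pi_eq_sum_univ' x, IsLinearMap.mk'_apply]
    _ = ∑ i, x i • f (Pi.single i 1) := by
      simp only [map_sum, map_smul, IsLinearMap.mk'_apply]

theorem phi3_e3_zero : phi3 (e3 0) = 0 := by
  ext i
  fin_cases i <;> simp [phi3, e3]

theorem phi3_e3_one : phi3 (e3 1) = e3 2 := by
  ext i
  fin_cases i <;> simp [phi3, e3]

theorem phi3_phi3 {y : V3} (hy : y 0 = 0) : phi3 (phi3 y) = y := by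
  ext i
  fin_cases i <;> simp [phi3, hy]

namespace IsTrilinear

variable {F : V3 → V3 → V3 → ℝ}

theorem isLinearMap_left (hF : IsTrilinear F) (y z : V3) : IsLinearMap ℝ fun x => F x y z :=
  isLinearMap_of_map_smul_add fun c x x' => hF.1 c x x' y z

theorem isLinearMap_middle (hF : IsTrilinear F) (x z : V3) : IsLinearMap ℝ fun y => F x y z :=
  isLinearMap_of_map_smul_add fun c y y' => hF.2.1 c x y y' z

theorem isLinearMap_right (hF : IsTrilinear F) (x y : V3) : IsLinearMap ℝ (F x y) :=
  isLinearMap_of_map_smul_add fun c z z' => hF.2.2 c x y z z'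

theorem apply_eq_sum_left (hF : IsTrilinear F) (x y z : V3) :
    F x y z = ∑ i, x i * F (e3 i) y z :=
  isLinearMap_apply_eq_sum_single (hF.isLinearMap_left y z) x

theorem apply_eq_sum_middle (hF : IsTrilinear F) (x y z : V3) :
    F x y z = ∑ j, y j * F x (e3 j) z :=
  isLinearMap_apply_eq_sum_single (hF.isLinearMap_middle x z) y

theorem apply_eq_sum_right (hF : IsTrilinear F) (x y z : V3) :
    F x y z = ∑ k, z k * F x y (e3 k) :=
  isLinearMap_apply_eq_sum_single (hF.isLinearMap_right x y) z

end IsTrilinear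

namespace IsApapRSymmetric

variable {F : V3 → V3 → V3 → ℝ}

theorem isTrilinear (hF : IsApapRSymmetric F) : IsTrilinear F := hF.1

theorem apply_comm (hF : IsApapRSymmetric F) (x y z : V3) : F x y z = F x z y := hF.2.1 x y z

theorem apply_eq_neg_phi3_add (hF : IsApapRSymmetric F) (x y z : V3) :
    F x y z = -F x (phi3 y) (phi3 z) + y 0 * F x (e3 0) z + z 0 * F x y (e3 0) :=
  hF.2.2 x y z

theorem apply_e3_zero_zero (hF : IsApapRSymmetric F) (x : V3) : F x (e3 0) (e3 0) = 0 := by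
  have phi3_term : F x (phi3 (e3 0)) (phi3 (e3 0)) = 0 := by
    rw [phi3_e3_zero]
    exact (hF.isTrilinear.isLinearMap_right x 0).map_zero
  have e3_zero : e3 0 0 = 1 := Pi.single_eq_same 0 1
  have h := hF.apply_eq_neg_phi3_add x (e3 0) (e3 0)
  rw [phi3_term, e3_zero] at h
  linarith

theorem apply_phi3_phi3 (hF : IsApapRSymmetric F) (x : V3) {y z : V3} (hy : y 0 = 0)
    (hz : z 0 = 0) : F x (phi3 y) (phi3 z) = -F x y z := by
  rw [hF.apply_eq_neg_phi3_add x y z, hy, hz]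
  ring

theorem apply_phi3_self (hF : IsApapRSymmetric F) (x : V3) {y : V3} (hy : y 0 = 0) :
    F x y (phi3 y) = 0 := by
  refine self_eq_neg.mp ?_
  calc
    F x y (phi3 y) = F x (phi3 y) (phi3 (phi3 y)) := by rw [phi3_phi3 hy, hF.apply_comm]
    _ = -F x y (phi3 y) := hF.apply_phi3_phi3 x hy rfl

theorem apply_e3_one_two (hF : IsApapRSymmetric F) (x : V3) : F x (e3 1) (e3 2) = 0 := by
  rw [← phi3_e3_one]
  exact hF.apply_phi3_self x (by simp [e3])

theorem apply_e3_two_two (hF : IsApapRSymmetric F) (x : V3) :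
    F x (e3 2) (e3 2) = -F x (e3 1) (e3 1) := by
  rw [← phi3_e3_one]
  exact hF.apply_phi3_phi3 x (by simp [e3]) (by simp [e3])

theorem apply_eq_of_coords (hF : IsApapRSymmetric F) (x y z : V3) :
    F x y z = (y 1 * z 1 - y 2 * z 2) * F x (e3 1) (e3 1)
      + (y 0 * z 1 + y 1 * z 0) * F x (e3 1) (e3 0)
      + (y 0 * z 2 + y 2 * z 0) * F x (e3 2) (e3 0) := by
  have expand_right (y : V3) :
      F x y z = z 0 * F x y (e3 0) + z 1 * F x y (e3 1) + z 2 * F x y (e3 2) := by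
    rw [hF.isTrilinear.apply_eq_sum_right, Fin.sum_univ_three]
  rw [hF.isTrilinear.apply_eq_sum_middle, Fin.sum_univ_three, expand_right (e3 0),
    expand_right (e3 1), expand_right (e3 2), hF.apply_comm x (e3 0) (e3 1),
    hF.apply_comm x (e3 0) (e3 2), hF.apply_comm x (e3 2) (e3 1), hF.apply_e3_zero_zero,
    hF.apply_e3_one_two, hF.apply_e3_two_two]
  ring

end IsApapRSymmetric

/-- Every apapR-symmetric trilinear form on `ℝ³` decomposes as
`F = F¹ + F⁴ + F⁵ + F⁸ + F⁹ + F¹⁰ + F¹¹`, the sum of the basic-class forms with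
parameters `θ₀, θ₁, θ₂, θ*₀, λ, μ, ν, ω₁, ω₂` computed from the components of `F`.
Hence a 3-dimensional apapR manifold can belong only to the classes
`F₁, F₄, F₅, F₈, F₉, F₁₀, F₁₁` and their direct sums. -/
theorem statement1 (F : V3 → V3 → V3 → ℝ) (hF : IsApapRSymmetric F)
    (θ₀ θ₁ θ₂ θs₀ lam mu nu om₁ om₂ : ℝ)
    (hθ₀ : θ₀ = F (e3 1) (e3 1) (e3 0) + F (e3 2) (e3 2) (e3 0))
    (hθ₁ : θ₁ = F (e3 1) (e3 1) (e3 1))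
    (hθ₂ : θ₂ = F (e3 2) (e3 2) (e3 2))
    (hθs₀ : θs₀ = F (e3 1) (e3 2) (e3 0) + F (e3 2) (e3 1) (e3 0))
    (hlam : lam = (F (e3 1) (e3 1) (e3 0) - F (e3 2) (e3 2) (e3 0)) / 2)
    (hmu : mu = (F (e3 1) (e3 2) (e3 0) - F (e3 2) (e3 1) (e3 0)) / 2)
    (hnu : nu = F (e3 0) (e3 1) (e3 1))
    (hom₁ : om₁ = F (e3 0) (e3 0) (e3 1))
    (hom₂ : om₂ = F (e3 0) (e3 0) (e3 2)) :
    ∀ x y z, F x y z =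
      (x 1 * θ₁ - x 2 * θ₂) * (y 1 * z 1 - y 2 * z 2)
      + θ₀ / 2 * (x 1 * (y 0 * z 1 + y 1 * z 0) + x 2 * (y 0 * z 2 + y 2 * z 0))
      + θs₀ / 2 * (x 1 * (y 0 * z 2 + y 2 * z 0) + x 2 * (y 0 * z 1 + y 1 * z 0))
      + lam * (x 1 * (y 0 * z 1 + y 1 * z 0) - x 2 * (y 0 * z 2 + y 2 * z 0))
      + mu * (x 1 * (y 0 * z 2 + y 2 * z 0) - x 2 * (y 0 * z 1 + y 1 * z 0))
      + nu * (x 0 * (y 1 * z 1 - y 2 * z 2))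
      + x 0 * (om₁ * (y 0 * z 1 + y 1 * z 0) + om₂ * (y 0 * z 2 + y 2 * z 0)) := by
  intro x y z
  have coeff_one_one : F x (e3 1) (e3 1) = x 0 * nu + x 1 * θ₁ - x 2 * θ₂ := by
    rw [hF.isTrilinear.apply_eq_sum_left, Fin.sum_univ_three, hnu, hθ₁, hθ₂, hF.apply_e3_two_two]
    ring
  have coeff_one_zero :
      F x (e3 1) (e3 0) = x 0 * om₁ + x 1 * (θ₀ / 2 + lam) + x 2 * (θs₀ / 2 - mu) := by
    rw [hF.isTrilinear.apply_eq_sum_left, Fin.sum_univ_three, hom₁, hθ₀, hlam, hθs₀, hmu,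
      hF.apply_comm (e3 0) (e3 1)]
    ring
  have coeff_two_zero :
      F x (e3 2) (e3 0) = x 0 * om₂ + x 1 * (θs₀ / 2 + mu) + x 2 * (θ₀ / 2 - lam) := by
    rw [hF.isTrilinear.apply_eq_sum_left, Fin.sum_univ_three, hom₂, hθ₀, hlam, hθs₀, hmu,
      hF.apply_comm (e3 0) (e3 2)]
    ring
  rw [hF.apply_eq_of_coords, coeff_one_one, coeff_one_zero, coeff_two_zero]
  ring
end
end

section
/- For reals a, b₁, b₂, the curvature-like tensor R_S has the following Ricci-type quantities: ρ(e₁,e₁) = ρ(e₂,e₂) = a − 1, ρ(e₀,e₀) = −2, ρ(e₁,e₂) = ρ(e₂,e₁) = 0, ρ(e₀,e₁) = ρ(e₁,e₀) = b₁, ρ(e₀,e₂) = ρ(e₂,e₀) = b₂; ρ*(e₀,e₀) = ρ*(e₁,e₁) = ρ*(e₂,e₂) = 0, ρ*(e₁,e₂) = ρ*(e₂,e₁) = −a, ρ*(e₀,e₁) = ρ*(e₁,e₀) = −b₂, ρ*(e₀,e₂) = ρ*(e₂,e₀) = −b₁; and τ = 2a − 4, τ* = 0. -/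
noncomputable section

/-- A map `R : V⁴ → ℝ` is 4-linear. -/
def IsQuadrilinear (R : V3 → V3 → V3 → V3 → ℝ) : Prop :=
  (∀ (c : ℝ) (x x' y z w : V3), R (c • x + x') y z w = c * R x y z w + R x' y z w) ∧
  (∀ (c : ℝ) (x y y' z w : V3), R x (c • y + y') z w = c * R x y z w + R x y' z w) ∧
  (∀ (c : ℝ) (x y z z' w : V3), R x y (c • z + z') w = c * R x y z w + R x y z' w) ∧
  (∀ (c : ℝ) (x y z w w' : V3), R x y z (c • w + w') = c * R x y z w + R x y z w')

/-- A curvature-like tensor: 4-linear with the standard curvature symmetries. -/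
def CurvatureLike (R : V3 → V3 → V3 → V3 → ℝ) : Prop :=
  IsQuadrilinear R ∧
  (∀ x y z w, R x y z w = - R y x z w) ∧
  (∀ x y z w, R x y z w = - R x y w z) ∧
  (∀ x y z w, R x y z w = R z w x y)

/-!
Since `{e₀, e₁, e₂}` has only three elements, the antisymmetries leave a single term in each
off-diagonal Ricci component and two terms in each diagonal one. As `φ` kills `e₀` and exchanges
`e₁` and `e₂`, one has `ρ*(y, z) = R(e₁, y, z, e₂) + R(e₂, y, z, e₁)`, so that each component of
`ρ*` vanishes, is a multiple of an off-diagonal component of `ρ`, or equals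
`ρ*(e₁, e₂) = -R(e₁, e₂, e₂, e₁)`.
-/

/-- The Ricci tensor `ρ` of `R`, the trace of `R` over its outer arguments. -/
def ricci (R : V3 → V3 → V3 → V3 → ℝ) (y z : V3) : ℝ := ∑ i, R (e3 i) y z (e3 i)

/-- The associated Ricci tensor `ρ*` of `R`, the trace over the outer arguments twisted by `φ`. -/
def ricciStar (R : V3 → V3 → V3 → V3 → ℝ) (y z : V3) : ℝ := ∑ i, R (e3 i) y z (phi3 (e3 i))

theorem phi3_e3_two : phi3 (e3 2) = e3 1 := by
  ext i; fin_cases i <;> simp [phi3, e3]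

theorem sum_fin_three_of_nodup {M : Type*} [AddCommMonoid M] {i j k : Fin 3} (h : [i, j, k].Nodup)
    (f : Fin 3 → M) : ∑ l, f l = f i + f j + f k := by
  have univ_eq : (Finset.univ : Finset (Fin 3)) = [i, j, k].toFinset := by decide +revert
  rw [univ_eq, List.sum_toFinset f h]
  simp only [List.map_cons, List.map_nil, List.sum_cons, List.sum_nil, add_zero, add_assoc]

theorem IsQuadrilinear.apply_zero_right {R : V3 → V3 → V3 → V3 → ℝ} (hR : IsQuadrilinear R)
    (x y z : V3) : R x y z 0 = 0 := by
  simpa using hR.2.2.2 1 x y z 0 0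

namespace CurvatureLike

variable {R : V3 → V3 → V3 → V3 → ℝ}

theorem apply_swap_left (hR : CurvatureLike R) (x y z w : V3) : R x y z w = -R y x z w :=
  hR.2.1 x y z w

theorem apply_swap_right (hR : CurvatureLike R) (x y z w : V3) : R x y z w = -R x y w z :=
  hR.2.2.1 x y z w

theorem apply_swap_pairs (hR : CurvatureLike R) (x y z w : V3) : R x y z w = R z w x y :=
  hR.2.2.2 x y z w

theorem apply_swap_left_right (hR : CurvatureLike R) (x y z w : V3) : R x y z w = R y x w z := by
  rw [hR.apply_swap_left, hR.apply_swap_right, neg_neg]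

theorem apply_reverse (hR : CurvatureLike R) (x y z w : V3) : R x y z w = R w z y x := by
  rw [hR.apply_swap_left_right, hR.apply_swap_pairs]

theorem apply_self_left (hR : CurvatureLike R) (x z w : V3) : R x x z w = 0 :=
  self_eq_neg.mp (hR.apply_swap_left x x z w)

theorem apply_self_right (hR : CurvatureLike R) (x y z : V3) : R x y z z = 0 :=
  self_eq_neg.mp (hR.apply_swap_right x y z z)

theorem ricci_comm (hR : CurvatureLike R) (y z : V3) : ricci R y z = ricci R z y :=
  Finset.sum_congr rfl fun i _ => hR.apply_reverse (e3 i) y z (e3 i)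

theorem ricci_e3_self_of_nodup (hR : CurvatureLike R) {i j k : Fin 3} (h : [i, j, k].Nodup) :
    ricci R (e3 i) (e3 i) =
      R (e3 i) (e3 j) (e3 j) (e3 i) + R (e3 i) (e3 k) (e3 k) (e3 i) := by
  rw [ricci, sum_fin_three_of_nodup h, hR.apply_self_left, zero_add,
    hR.apply_swap_left_right (e3 j), hR.apply_swap_left_right (e3 k)]

theorem ricci_e3_of_nodup (hR : CurvatureLike R) {i j k : Fin 3} (h : [i, j, k].Nodup) :
    ricci R (e3 i) (e3 j) = R (e3 j) (e3 k) (e3 k) (e3 i) := by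
  rw [ricci, sum_fin_three_of_nodup h, hR.apply_self_left, hR.apply_self_right,
    zero_add, zero_add, hR.apply_swap_pairs]

theorem ricciStar_eq_add (hR : CurvatureLike R) (y z : V3) :
    ricciStar R y z = R (e3 1) y z (e3 2) + R (e3 2) y z (e3 1) := by
  rw [ricciStar, Fin.sum_univ_three, phi3_e3_zero, phi3_e3_one, phi3_e3_two,
    hR.1.apply_zero_right, zero_add]

theorem ricciStar_comm (hR : CurvatureLike R) (y z : V3) :
    ricciStar R y z = ricciStar R z y := by
  rw [hR.ricciStar_eq_add, hR.ricciStar_eq_add, hR.apply_reverse (e3 1) y,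
    hR.apply_reverse (e3 2) y, add_comm]

theorem ricciStar_e3_zero_zero (hR : CurvatureLike R) :
    ricciStar R (e3 0) (e3 0) = 2 * ricci R (e3 1) (e3 2) := by
  rw [hR.ricciStar_eq_add, hR.ricci_e3_of_nodup (k := 0) (by decide),
    hR.apply_reverse (e3 1), two_mul]

theorem ricciStar_e3_one_one (hR : CurvatureLike R) : ricciStar R (e3 1) (e3 1) = 0 := by
  rw [hR.ricciStar_eq_add, hR.apply_self_left, hR.apply_self_right, add_zero]

theorem ricciStar_e3_two_two (hR : CurvatureLike R) : ricciStar R (e3 2) (e3 2) = 0 := by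
  rw [hR.ricciStar_eq_add, hR.apply_self_left, hR.apply_self_right, add_zero]

theorem ricciStar_e3_one_two (hR : CurvatureLike R) :
    ricciStar R (e3 1) (e3 2) = -R (e3 1) (e3 2) (e3 2) (e3 1) := by
  rw [hR.ricciStar_eq_add, hR.apply_self_left, zero_add, hR.apply_swap_left]

theorem ricciStar_e3_zero_one (hR : CurvatureLike R) :
    ricciStar R (e3 0) (e3 1) = -ricci R (e3 0) (e3 2) := by
  rw [hR.ricciStar_eq_add, hR.apply_self_right, add_zero,
    hR.ricci_e3_of_nodup (k := 1) (by decide), hR.apply_swap_pairs, hR.apply_swap_left]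

theorem ricciStar_e3_zero_two (hR : CurvatureLike R) :
    ricciStar R (e3 0) (e3 2) = -ricci R (e3 0) (e3 1) := by
  rw [hR.ricciStar_eq_add, hR.apply_self_right, zero_add,
    hR.ricci_e3_of_nodup (k := 2) (by decide), hR.apply_swap_pairs, hR.apply_swap_left]

end CurvatureLike

/-- Ricci-type quantities of the curvature tensor `R_S` of the hyperbolic extension:
the hypotheses say that `R` is curvature-like with components
`R(e₁,e₂,e₂,e₁) = a`, `R(e₁,e₂,e₁,e₀) = −b₂`, `R(e₁,e₂,e₂,e₀) = b₁`,
`R(e₀,e₁,e₁,e₀) = R(e₀,e₂,e₂,e₀) = −1`, all components not determined from these by the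
curvature symmetries vanishing (`R(e₀,e₁,e₀,e₂) = 0` is the only remaining one). -/
theorem statement11 (a b₁ b₂ : ℝ) (R : V3 → V3 → V3 → V3 → ℝ)
    (hR : CurvatureLike R)
    (h1 : R (e3 1) (e3 2) (e3 2) (e3 1) = a)
    (h2 : R (e3 1) (e3 2) (e3 1) (e3 0) = -b₂)
    (h3 : R (e3 1) (e3 2) (e3 2) (e3 0) = b₁)
    (h4 : R (e3 0) (e3 1) (e3 1) (e3 0) = -1)
    (h5 : R (e3 0) (e3 2) (e3 2) (e3 0) = -1)
    (h6 : R (e3 0) (e3 1) (e3 0) (e3 2) = 0)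
    (ρ ρs : V3 → V3 → ℝ) (τ τs : ℝ)
    (hρ : ∀ y z, ρ y z = ∑ i, R (e3 i) y z (e3 i))
    (hρs : ∀ y z, ρs y z = ∑ i, R (e3 i) y z (phi3 (e3 i)))
    (hτ : τ = ∑ i, ρ (e3 i) (e3 i))
    (hτs : τs = ∑ i, ρs (e3 i) (e3 i)) :
    (ρ (e3 1) (e3 1) = a - 1 ∧ ρ (e3 2) (e3 2) = a - 1 ∧ ρ (e3 0) (e3 0) = -2 ∧
      ρ (e3 1) (e3 2) = 0 ∧ ρ (e3 2) (e3 1) = 0 ∧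
      ρ (e3 0) (e3 1) = b₁ ∧ ρ (e3 1) (e3 0) = b₁ ∧
      ρ (e3 0) (e3 2) = b₂ ∧ ρ (e3 2) (e3 0) = b₂) ∧
    (ρs (e3 0) (e3 0) = 0 ∧ ρs (e3 1) (e3 1) = 0 ∧ ρs (e3 2) (e3 2) = 0 ∧
      ρs (e3 1) (e3 2) = -a ∧ ρs (e3 2) (e3 1) = -a ∧
      ρs (e3 0) (e3 1) = -b₂ ∧ ρs (e3 1) (e3 0) = -b₂ ∧
      ρs (e3 0) (e3 2) = -b₁ ∧ ρs (e3 2) (e3 0) = -b₁) ∧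
    τ = 2 * a - 4 ∧ τs = 0 := by
  obtain rfl : ρ = ricci R := funext₂ hρ
  obtain rfl : ρs = ricciStar R := funext₂ hρs
  have ricci₀₀ : ricci R (e3 0) (e3 0) = -2 := by
    rw [hR.ricci_e3_self_of_nodup (j := 1) (k := 2) (by decide), h4, h5]; norm_num
  have ricci₁₁ : ricci R (e3 1) (e3 1) = a - 1 := by
    rw [hR.ricci_e3_self_of_nodup (j := 2) (k := 0) (by decide), h1, hR.apply_swap_left_right, h4,
      sub_eq_add_neg]
  have ricci₂₂ : ricci R (e3 2) (e3 2) = a - 1 := by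
    rw [hR.ricci_e3_self_of_nodup (j := 1) (k := 0) (by decide),
      hR.apply_swap_left_right, h1, hR.apply_swap_left_right, h5, sub_eq_add_neg]
  have ricci₀₁ : ricci R (e3 0) (e3 1) = b₁ := by
    rw [hR.ricci_e3_of_nodup (k := 2) (by decide), h3]
  have ricci₀₂ : ricci R (e3 0) (e3 2) = b₂ := by
    rw [hR.ricci_e3_of_nodup (k := 1) (by decide), hR.apply_swap_left, h2, neg_neg]
  have ricci₁₂ : ricci R (e3 1) (e3 2) = 0 := by
    rw [hR.ricci_e3_of_nodup (k := 0) (by decide), hR.apply_swap_pairs, hR.apply_swap_right,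
      h6, neg_zero]
  have τ_eq : τ = 2 * a - 4 := by
    rw [hτ, Fin.sum_univ_three, ricci₀₀, ricci₁₁, ricci₂₂]; ring
  simp [τ_eq, hτs, Fin.sum_univ_three, hR.ricci_comm (e3 1) (e3 0),
    hR.ricci_comm (e3 2), hR.ricciStar_comm (e3 1) (e3 0), hR.ricciStar_comm (e3 2),
    hR.ricciStar_e3_zero_zero, hR.ricciStar_e3_one_one, hR.ricciStar_e3_two_two,
    hR.ricciStar_e3_one_two, hR.ricciStar_e3_zero_one, hR.ricciStar_e3_zero_two,
    ricci₀₀, ricci₁₁, ricci₂₂, ricci₀₁, ricci₀₂, ricci₁₂, h1]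
end
end
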